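/- Let K be a triangle with diameter h_K and B an edge of K. There exists a constant C such that for every v in H^2(K), ||∇v||_{L^2(B)} ≤ C |B|^{1/2} |K|^{-1/2} ( ||∇v||_{L^2(K)} + h_K ||∇²v||_{L^2(K)} ), where ∇²v is the Hessian of v. -/

import Mathlib

open MeasureTheory

abbrev E2 := EuclideanSpace ℝ (Fin 2)

/-!
Let `K` be the triangle `ABC`. Integrating `d/ds (s ^ 2 • w (C + s • (P - C)))` over `[0, 1]`
expresses `w P`, for `P` on the edge `AB`, through the values of `w` and `fderiv ℝ w` on the segment
from `C` to `P`. As `P` runs over the edge these segments sweep out `K`, with Jacobian proportional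
to `s`, which gives the trace identity
`∫_{AB} w = |AB| ⨍_K (w x + (1 / 2) Dw(x)(x - C)) dx`.
Applied to `w = ‖g‖ ^ 2`, whose half derivative in the direction `x - C` is at most
`h_K ‖g x‖ ‖Dg x‖`, it yields the trace inequality with constant `1` by the Cauchy–Schwarz
inequality.
-/

open AffineMap (lineMap)
open Module (finrank)

section Integrals

lemma integral_mul_le_sqrt_mul_sqrt {α : Type*} [MeasurableSpace α] {μ : Measure α}
    {f g : α → ℝ} (hf₀ : 0 ≤ᵐ[μ] f) (hg₀ : 0 ≤ᵐ[μ] g) (hf : MemLp f 2 μ) (hg : MemLp g 2 μ) :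
    ∫ x, f x * g x ∂μ ≤ √(∫ x, f x ^ 2 ∂μ) * √(∫ x, g x ^ 2 ∂μ) := by
  simpa only [Real.rpow_two, Real.sqrt_eq_rpow] using
    integral_mul_le_Lp_mul_Lq_of_nonneg Real.HolderConjugate.two_two hf₀ hg₀
      (by simpa using hf) (by simpa using hg)

variable {E F : Type*} [NormedAddCommGroup E] [NormedSpace ℝ E] [MeasurableSpace E] [BorelSpace E]
  [NormedAddCommGroup F] [NormedSpace ℝ F]

lemma hausdorffMeasure_one_restrict_segment (A B : E) :
    (μH[1] : Measure E).restrict (segment ℝ A B) =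
      nndist A B • (volume.restrict (Set.Icc (0 : ℝ) 1)).map (lineMap A B) := by
  ext s hs
  have hγ : Measurable (lineMap A B : ℝ → E) := AffineMap.lineMap_continuous.measurable
  rw [Measure.restrict_apply hs, Measure.smul_apply, Measure.map_apply hγ hs,
    Measure.restrict_apply (hγ hs), segment_eq_image_lineMap, Set.inter_comm,
    ← Set.image_inter_preimage, hausdorffMeasure_lineMap_image, hausdorffMeasure_real,
    Set.inter_comm]

lemma setIntegral_segment_hausdorffMeasure (A B : E) (f : E → F) :
    ∫ x in segment ℝ A B, f x ∂μH[1] = dist A B • ∫ t in (0 : ℝ)..1, f (lineMap A B t) := by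
  rw [hausdorffMeasure_one_restrict_segment, integral_smul_nnreal_measure, NNReal.smul_def,
    coe_nndist]
  rcases eq_or_ne A B with rfl | hAB
  · simp only [dist_self, zero_smul]
  · rw [(AffineMap.lineMap_continuous.measurableEmbedding
        (AffineMap.lineMap_injective ℝ hAB)).integral_map,
      integral_Icc_eq_integral_Ioc, intervalIntegral.integral_of_le zero_le_one]

end Integrals

section AffineInvariance

variable {V E F : Type*} [NormedAddCommGroup V] [NormedSpace ℝ V] [FiniteDimensional ℝ V]
  [MeasurableSpace V] [BorelSpace V] [NormedAddCommGroup E] [NormedSpace ℝ E]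
  [MeasurableSpace E] [BorelSpace E] [NormedAddCommGroup F] [NormedSpace ℝ F]

lemma exists_map_continuousAffineEquiv_eq_smul (φ : V ≃ᴬ[ℝ] E) (ν : Measure V)
    [ν.IsAddHaarMeasure] (μ : Measure E) [μ.IsAddHaarMeasure] :
    ∃ c : NNReal, c ≠ 0 ∧ ν.map φ = c • μ := by
  let L : V ≃L[ℝ] E := φ.toAffineEquiv.linear.toContinuousLinearEquiv
  have : FiniteDimensional ℝ E := L.toLinearEquiv.finiteDimensional
  have : (ν.map L).IsAddHaarMeasure := L.isAddHaarMeasure_map ν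
  have hφ : ⇑φ = (· + φ 0) ∘ L := φ.toAffineEquiv.toAffineMap.decomp
  refine ⟨(ν.map L).addHaarScalarFactor μ,
    (Measure.addHaarScalarFactor_pos_of_isAddHaarMeasure _ _).ne', ?_⟩
  rw [hφ, ← Measure.map_map (measurable_add_const _) L.continuous.measurable,
    map_add_right_eq_self, ← Measure.isAddLeftInvariant_eq_smul]

lemma setAverage_image_continuousAffineEquiv (φ : V ≃ᴬ[ℝ] E) (ν : Measure V)
    [ν.IsAddHaarMeasure] (μ : Measure E) [μ.IsAddHaarMeasure] (s : Set V) (f : E → F) :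
    ⨍ x in φ '' s, f x ∂μ = ⨍ p in s, f (φ p) ∂ν := by
  obtain ⟨c, hc, hmap⟩ := exists_map_continuousAffineEquiv_eq_smul φ ν μ
  have hφ : MeasurableEmbedding φ := φ.toHomeomorph.measurableEmbedding
  have hmeas : ν.real s = c • μ.real (φ '' s) := by
    rw [NNReal.smul_def, smul_eq_mul, ← measureReal_nnreal_smul_apply, ← hmap,
      measureReal_def, measureReal_def, hφ.map_apply, Set.preimage_image_eq _ φ.injective]
  have hint : ∫ p in s, f (φ p) ∂ν = c • ∫ x in φ '' s, f x ∂μ := by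
    rw [← integral_smul_nnreal_measure, ← Measure.restrict_smul, ← hmap, hφ.setIntegral_map,
      Set.preimage_image_eq _ φ.injective]
  have hc' : (c : ℝ) ≠ 0 := NNReal.coe_ne_zero.2 hc
  rw [setAverage_eq, setAverage_eq, hmeas, hint, NNReal.smul_def, NNReal.smul_def, smul_smul,
    smul_eq_mul, mul_inv, mul_right_comm, inv_mul_cancel₀ hc', one_mul]

end AffineInvariance

/-- The reference triangle of the Duffy transform `(s, t) ↦ (s, s * t)`, which maps the unit square
onto it and collapses the side `s = 0` to the vertex `(0, 0)`. -/
def referenceTriangle : Set (ℝ × ℝ) := convexHull ℝ {(1, 0), (1, 1), (0, 0)}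

lemma mem_referenceTriangle {p : ℝ × ℝ} :
    p ∈ referenceTriangle ↔ p.1 ∈ Set.Icc 0 1 ∧ p.2 ∈ Set.Icc 0 p.1 := by
  constructor
  · have hconv : Convex ℝ {p : ℝ × ℝ | p.1 ∈ Set.Icc 0 1 ∧ p.2 ∈ Set.Icc 0 p.1} := by
      rintro p ⟨hp₁, hp₂⟩ q ⟨hq₁, hq₂⟩ a b ha hb hab
      refine ⟨convex_Icc 0 1 hp₁ hq₁ ha hb hab, ?_, ?_⟩
      · exact add_nonneg (mul_nonneg ha hp₂.1) (mul_nonneg hb hq₂.1)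
      · exact add_le_add (mul_le_mul_of_nonneg_left hp₂.2 ha) (mul_le_mul_of_nonneg_left hq₂.2 hb)
    refine fun hp ↦ convexHull_min ?_ hconv hp
    rintro q (rfl | rfl | rfl) <;> simp
  · obtain ⟨s, w⟩ := p
    rintro ⟨⟨-, hs⟩, hw, hws⟩
    refine mem_convexHull_of_exists_fintype ![s - w, w, 1 - s] ![(1, 0), (1, 1), (0, 0)] ?_ ?_ ?_ ?_
    · simpa [Fin.forall_fin_succ] using ⟨hws, hw, hs⟩
    · simp [Fin.sum_univ_three]
    · simp [Fin.forall_fin_succ]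
    · simp [Fin.sum_univ_three]

section Duffy

variable {F : Type*} [NormedAddCommGroup F] [NormedSpace ℝ F]

lemma isCompact_referenceTriangle : IsCompact referenceTriangle :=
  (Set.toFinite _).isCompact_convexHull ℝ

lemma setIntegral_referenceTriangle {f : (ℝ × ℝ) → F} (hf : IntegrableOn f referenceTriangle) :
    ∫ p in referenceTriangle, f p = ∫ s in (0 : ℝ)..1, ∫ w in (0 : ℝ)..s, f (s, w) := by
  have hmeas : MeasurableSet referenceTriangle := isCompact_referenceTriangle.measurableSet
  have hslice (s w : ℝ) : referenceTriangle.indicator f (s, w) =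
      (Set.Icc 0 1).indicator (fun s ↦ (Set.Icc 0 s).indicator (fun w ↦ f (s, w)) w) s := by
    classical simp only [Set.indicator_apply, mem_referenceTriangle, ite_and]
  rw [← integral_indicator hmeas, Measure.volume_eq_prod,
    integral_prod _ ((integrable_indicator_iff hmeas).2 hf),
    intervalIntegral.integral_of_le zero_le_one, ← integral_Icc_eq_integral_Ioc,
    ← integral_indicator measurableSet_Icc]
  congr with s
  by_cases hs : s ∈ Set.Icc (0 : ℝ) 1
  · simp only [hslice, Set.indicator_of_mem hs, integral_indicator measurableSet_Icc,
      integral_Icc_eq_integral_Ioc, intervalIntegral.integral_of_le hs.1]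
  · simp only [hslice, Set.indicator_of_notMem hs, integral_zero]

lemma setIntegral_referenceTriangle_eq_duffy {f : (ℝ × ℝ) → F}
    (hf : IntegrableOn f referenceTriangle) :
    ∫ p in referenceTriangle, f p = ∫ s in (0 : ℝ)..1, ∫ t in (0 : ℝ)..1, s • f (s, s * t) := by
  rw [setIntegral_referenceTriangle hf]
  congr with s
  simpa using (intervalIntegral.smul_integral_comp_mul_left (a := 0) (b := 1)
    (fun w ↦ f (s, w)) s).symm

lemma volume_real_referenceTriangle : volume.real referenceTriangle = 1 / 2 := by
  rw [← setIntegral_one_eq_measureReal, setIntegral_referenceTriangle_eq_duffy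
    (integrableOn_const isCompact_referenceTriangle.measure_lt_top.ne)]
  simp

lemma setAverage_referenceTriangle {f : (ℝ × ℝ) → F} (hf : Continuous f) :
    ⨍ p in referenceTriangle, f p =
      ∫ t in (0 : ℝ)..1, ∫ s in (0 : ℝ)..1, (2 * s) • f (s, s * t) := by
  have hint : IntegrableOn (Function.uncurry fun s t ↦ s • f (s, s * t))
      (Set.uIcc 0 1 ×ˢ Set.uIcc 0 1) :=
    Continuous.continuousOn (by simp only [Function.uncurry_def]; fun_prop)
      |>.integrableOn_compact (isCompact_uIcc.prod isCompact_uIcc)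
  rw [setAverage_eq, volume_real_referenceTriangle, setIntegral_referenceTriangle_eq_duffy
    (hf.continuousOn.integrableOn_compact isCompact_referenceTriangle),
    intervalIntegral_intervalIntegral_swap
      (hint.mono_set (Set.prod_mono Set.uIoc_subset_uIcc Set.uIoc_subset_uIcc))]
  simp only [mul_smul, intervalIntegral.integral_smul, one_div, inv_inv]

end Duffy

section Triangle

variable {E F : Type*} [NormedAddCommGroup E] [NormedSpace ℝ E]
  [NormedAddCommGroup F] [NormedSpace ℝ F] {A B C : E}

lemma eq_integral_lineMap_of_contDiff [CompleteSpace F] {w : E → F} (hw : ContDiff ℝ 1 w)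
    (P C : E) :
    w P = ∫ s in (0 : ℝ)..1, (2 * s) • (w (lineMap C P s) +
      (1 / 2 : ℝ) • fderiv ℝ w (lineMap C P s) (lineMap C P s - C)) := by
  have : Continuous (fderiv ℝ w) := hw.continuous_fderiv one_ne_zero
  have hderiv (s : ℝ) : HasDerivAt (fun s : ℝ ↦ s ^ 2 • w (lineMap C P s))
      ((2 * s) • (w (lineMap C P s) +
        (1 / 2 : ℝ) • fderiv ℝ w (lineMap C P s) (lineMap C P s - C))) s := by
    have hray := ((hw.differentiable one_ne_zero _).hasFDerivAt).comp_hasDerivAt s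
      (AffineMap.hasDerivAt_lineMap (a := C) (b := P))
    refine ((hasDerivAt_pow 2 s).fun_smul hray).congr_deriv ?_
    simp only [AffineMap.lineMap_apply_module', add_sub_cancel_right, map_smul, Nat.cast_ofNat,
      Nat.add_one_sub_one, pow_one, Function.comp_apply]
    module
  rw [intervalIntegral.integral_eq_sub_of_hasDerivAt (fun s _ ↦ hderiv s)
    (Continuous.intervalIntegrable (by fun_prop) _ _)]
  simp

lemma linearIndependent_sub_sub_of_affineIndependent (h : AffineIndependent ℝ ![A, B, C]) :
    LinearIndependent ℝ ![A - C, B - A] := by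
  refine LinearIndependent.pair_iff.2 fun s w hsw ↦ ?_
  have hzero : ∀ i, ![s - w, w, -s] i = 0 := by
    refine fun i ↦ affineIndependent_iff.1 h Finset.univ _ ?_ ?_ i (Finset.mem_univ i)
    · simp [Fin.sum_univ_three]
    · simp only [Fin.sum_univ_three, Matrix.cons_val]
      rw [← hsw]
      module
  exact ⟨neg_eq_zero.1 (hzero 2), hzero 1⟩

lemma exists_continuousAffineEquiv_of_affineIndependent (hE : finrank ℝ E = 2)
    (h : AffineIndependent ℝ ![A, B, C]) :
    ∃ φ : (ℝ × ℝ) ≃ᴬ[ℝ] E, φ (1, 0) = A ∧ φ (1, 1) = B ∧ φ (0, 0) = C := by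
  let L : (ℝ × ℝ) →ₗ[ℝ] E :=
    (LinearMap.toSpanSingleton ℝ E (A - C)).coprod (LinearMap.toSpanSingleton ℝ E (B - A))
  have hL : Function.Injective L := by
    rw [← LinearMap.ker_eq_bot, LinearMap.ker_eq_bot']
    rintro ⟨s, w⟩ hsw
    exact Prod.ext_iff.2 (LinearIndependent.pair_iff.1
      (linearIndependent_sub_sub_of_affineIndependent h) s w hsw)
  have : FiniteDimensional ℝ E := .of_finrank_pos (by simp [hE])
  let e : (ℝ × ℝ) ≃L[ℝ] E := (L.linearEquivOfInjective hL (by simp [hE])).toContinuousLinearEquiv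
  let φ : (ℝ × ℝ) ≃ᴬ[ℝ] E := e.toContinuousAffineEquiv.trans (.constVAdd ℝ E C)
  have hφ (s w : ℝ) : φ (s, w) = C + (s • (A - C) + w • (B - A)) := rfl
  exact ⟨φ, by simp [hφ], by simp [hφ], by simp [hφ]⟩

lemma image_referenceTriangle (φ : (ℝ × ℝ) →ᵃ[ℝ] E) :
    φ '' referenceTriangle = convexHull ℝ {φ (1, 0), φ (1, 1), φ (0, 0)} := by
  rw [referenceTriangle, AffineMap.image_convexHull, Set.image_insert_eq, Set.image_pair]

lemma affineMap_apply_duffy (φ : (ℝ × ℝ) →ᵃ[ℝ] E) (s t : ℝ) :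
    φ (s, s * t) = lineMap (φ (0, 0)) (lineMap (φ (1, 0)) (φ (1, 1)) t) s := by
  rw [← AffineMap.apply_lineMap, ← AffineMap.apply_lineMap]
  simp [AffineMap.lineMap_apply]

variable [MeasurableSpace E] [BorelSpace E] (μ : Measure E) [μ.IsAddHaarMeasure]

lemma setAverage_triangle_eq_integral_lineMap (hE : finrank ℝ E = 2)
    (h : AffineIndependent ℝ ![A, B, C]) {f : E → F} (hf : Continuous f) :
    ⨍ x in convexHull ℝ {A, B, C}, f x ∂μ =
      ∫ t in (0 : ℝ)..1, ∫ s in (0 : ℝ)..1, (2 * s) • f (lineMap C (lineMap A B t) s) := by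
  obtain ⟨φ, rfl, rfl, rfl⟩ := exists_continuousAffineEquiv_of_affineIndependent hE h
  have hK : convexHull ℝ {φ (1, 0), φ (1, 1), φ (0, 0)} = φ '' referenceTriangle :=
    (image_referenceTriangle φ.toAffineEquiv.toAffineMap).symm
  have hφ (s t : ℝ) : φ (s, s * t) = lineMap (φ (0, 0)) (lineMap (φ (1, 0)) (φ (1, 1)) t) s :=
    affineMap_apply_duffy φ.toAffineEquiv.toAffineMap s t
  simp only [hK, setAverage_image_continuousAffineEquiv φ volume μ,
    setAverage_referenceTriangle (hf.comp' φ.continuous), hφ]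

theorem setIntegral_segment_eq_dist_smul_setAverage_triangle [CompleteSpace F]
    (hE : finrank ℝ E = 2) (h : AffineIndependent ℝ ![A, B, C]) {w : E → F} (hw : ContDiff ℝ 1 w) :
    ∫ x in segment ℝ A B, w x ∂μH[1] = dist A B •
      ⨍ x in convexHull ℝ {A, B, C}, (w x + (1 / 2 : ℝ) • fderiv ℝ w x (x - C)) ∂μ := by
  have : Continuous (fderiv ℝ w) := hw.continuous_fderiv one_ne_zero
  rw [setIntegral_segment_hausdorffMeasure,
    setAverage_triangle_eq_integral_lineMap μ hE h (by fun_prop)]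
  simp only [← eq_integral_lineMap_of_contDiff hw]

end Triangle

lemma contDiff_gradient {H : Type*} [NormedAddCommGroup H] [InnerProductSpace ℝ H]
    [CompleteSpace H] {v : H → ℝ} {m n : WithTop ℕ∞} (hv : ContDiff ℝ n v) (hmn : m + 1 ≤ n) :
    ContDiff ℝ m (gradient v) :=
  (InnerProductSpace.toDual ℝ H).symm.contDiff.comp (hv.fderiv_right hmn)

section TraceInequality

variable {E F : Type*} [NormedAddCommGroup E] [NormedSpace ℝ E]
  [NormedAddCommGroup F] [InnerProductSpace ℝ F] {A B C : E} {g : E → F} {K : Set E}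

lemma fderiv_norm_sq_apply_le {x v : E} (hg : DifferentiableAt ℝ g x) {h : ℝ} (hv : ‖v‖ ≤ h) :
    (1 / 2 : ℝ) * fderiv ℝ (fun y ↦ ‖g y‖ ^ 2) x v ≤ h * (‖g x‖ * ‖fderiv ℝ g x‖) := by
  calc (1 / 2 : ℝ) * fderiv ℝ (fun y ↦ ‖g y‖ ^ 2) x v = inner ℝ (g x) (fderiv ℝ g x v) := by
        simp [hg.hasFDerivAt.norm_sq.fderiv]
    _ ≤ ‖g x‖ * (‖fderiv ℝ g x‖ * ‖v‖) :=
        (real_inner_le_norm _ _).trans (by gcongr; exact (fderiv ℝ g x).le_opNorm v)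
    _ ≤ ‖g x‖ * (‖fderiv ℝ g x‖ * h) := by gcongr
    _ = h * (‖g x‖ * ‖fderiv ℝ g x‖) := by ring

variable [MeasurableSpace E] [BorelSpace E] {μ : Measure E} [IsFiniteMeasureOnCompacts μ]

lemma setIntegral_norm_mul_norm_fderiv_le (hK : IsCompact K) (hg : ContDiff ℝ 1 g) :
    ∫ x in K, ‖g x‖ * ‖fderiv ℝ g x‖ ∂μ ≤
      √(∫ x in K, ‖g x‖ ^ 2 ∂μ) * √(∫ x in K, ‖fderiv ℝ g x‖ ^ 2 ∂μ) := by
  have hL2 {f : E → ℝ} (hf : Continuous f) : MemLp f 2 (μ.restrict K) :=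
    (memLp_two_iff_integrable_sq hf.aestronglyMeasurable).2
      ((hf.pow 2).continuousOn.integrableOn_compact hK)
  exact integral_mul_le_sqrt_mul_sqrt (.of_forall fun _ ↦ norm_nonneg _)
    (.of_forall fun _ ↦ norm_nonneg _) (hL2 hg.continuous.norm)
    (hL2 (hg.continuous_fderiv one_ne_zero).norm)

lemma setIntegral_norm_sq_add_fderiv_le (hK : IsCompact K) (hg : ContDiff ℝ 1 g) (hC : C ∈ K) :
    ∫ x in K, (‖g x‖ ^ 2 + (1 / 2 : ℝ) • fderiv ℝ (fun y ↦ ‖g y‖ ^ 2) x (x - C)) ∂μ ≤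
      (∫ x in K, ‖g x‖ ^ 2 ∂μ) + Metric.diam K * ∫ x in K, ‖g x‖ * ‖fderiv ℝ g x‖ ∂μ := by
  have : Continuous g := hg.continuous
  have : Continuous (fderiv ℝ g) := hg.continuous_fderiv one_ne_zero
  have : Continuous (fderiv ℝ fun y ↦ ‖g y‖ ^ 2) :=
    (hg.norm_sq ℝ).continuous_fderiv one_ne_zero
  have hint {f : E → ℝ} (hf : Continuous f) : IntegrableOn f K μ :=
    hf.continuousOn.integrableOn_compact hK
  calc ∫ x in K, (‖g x‖ ^ 2 + (1 / 2 : ℝ) • fderiv ℝ (fun y ↦ ‖g y‖ ^ 2) x (x - C)) ∂μ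
      ≤ ∫ x in K, (‖g x‖ ^ 2 + Metric.diam K * (‖g x‖ * ‖fderiv ℝ g x‖)) ∂μ := by
        refine setIntegral_mono_on (hint (by fun_prop)) (hint (by fun_prop)) hK.measurableSet
          fun x hx ↦ ?_
        have hxC : ‖x - C‖ ≤ Metric.diam K :=
          dist_eq_norm x C ▸ Metric.dist_le_diam_of_mem hK.isBounded hx hC
        gcongr
        exact fderiv_norm_sq_apply_le (hg.differentiable one_ne_zero x) hxC
    _ = (∫ x in K, ‖g x‖ ^ 2 ∂μ) + Metric.diam K * ∫ x in K, ‖g x‖ * ‖fderiv ℝ g x‖ ∂μ := by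
        rw [integral_add (hint (by fun_prop)) (hint (by fun_prop)), integral_const_mul]

lemma setIntegral_norm_sq_add_fderiv_le_sq (hK : IsCompact K) (hg : ContDiff ℝ 1 g)
    (hC : C ∈ K) :
    ∫ x in K, (‖g x‖ ^ 2 + (1 / 2 : ℝ) • fderiv ℝ (fun y ↦ ‖g y‖ ^ 2) x (x - C)) ∂μ ≤
      (√(∫ x in K, ‖g x‖ ^ 2 ∂μ) +
        Metric.diam K * √(∫ x in K, ‖fderiv ℝ g x‖ ^ 2 ∂μ)) ^ 2 := by
  refine (setIntegral_norm_sq_add_fderiv_le hK hg hC).trans ?_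
  have hCS := setIntegral_norm_mul_norm_fderiv_le (μ := μ) hK hg
  set X := ∫ x in K, ‖g x‖ ^ 2 ∂μ
  set Y := ∫ x in K, ‖fderiv ℝ g x‖ ^ 2 ∂μ
  have hX : √X ^ 2 = X := Real.sq_sqrt (integral_nonneg fun x ↦ sq_nonneg _)
  have : 0 ≤ Metric.diam K := Metric.diam_nonneg
  calc X + Metric.diam K * ∫ x in K, ‖g x‖ * ‖fderiv ℝ g x‖ ∂μ
      ≤ √X ^ 2 + Metric.diam K * (√X * √Y) := by rw [hX]; gcongr
    _ ≤ √X ^ 2 + Metric.diam K * (√X * √Y) +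
          (Metric.diam K * (√X * √Y) + (Metric.diam K * √Y) ^ 2) :=
        le_add_of_nonneg_right (by positivity)
    _ = (√X + Metric.diam K * √Y) ^ 2 := by ring

theorem stmt1_general (hE : finrank ℝ E = 2) (μ : Measure E) [μ.IsAddHaarMeasure]
    (hABC : AffineIndependent ℝ ![A, B, C]) (hg : ContDiff ℝ 1 g) :
    √(∫ x in segment ℝ A B, ‖g x‖ ^ 2 ∂μH[1]) ≤
      √(dist A B) * (√(μ.real (convexHull ℝ {A, B, C})))⁻¹ *
        (√(∫ x in convexHull ℝ {A, B, C}, ‖g x‖ ^ 2 ∂μ) +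
          Metric.diam (convexHull ℝ {A, B, C}) *
            √(∫ x in convexHull ℝ {A, B, C}, ‖fderiv ℝ g x‖ ^ 2 ∂μ)) := by
  have hK : IsCompact (convexHull ℝ {A, B, C}) := (Set.toFinite _).isCompact_convexHull ℝ
  have hC : C ∈ convexHull ℝ {A, B, C} := subset_convexHull ℝ _ (by simp)
  rw [setIntegral_segment_eq_dist_smul_setAverage_triangle μ hE hABC (hg.norm_sq ℝ), setAverage_eq,
    smul_eq_mul, smul_eq_mul, ← mul_assoc]
  refine Real.sqrt_le_iff.2 ⟨by positivity, ?_⟩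
  rw [mul_pow, mul_pow, inv_pow, Real.sq_sqrt dist_nonneg, Real.sq_sqrt measureReal_nonneg]
  gcongr
  exact setIntegral_norm_sq_add_fderiv_le_sq hK hg hC

end TraceInequality

/-- Standard trace inequality for the gradient on a triangle: for any
shape-regularity bound `ρ` there is a constant `C` such that for every
`v ∈ H²(K)` (represented here by a `C²` function),
`‖∇v‖_{L²(B)} ≤ C |B|^{1/2} |K|^{-1/2} (‖∇v‖_{L²(K)} + h_K ‖∇²v‖_{L²(K)})`,
where `∇²v` is the Hessian of `v`, `B` an edge of the triangle `K`. -/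
theorem stmt1 (ρ : ℝ) (hρ : 0 < ρ) :
    ∃ C : ℝ, 0 < C ∧
      ∀ A B Cv : E2, AffineIndependent ℝ ![A, B, Cv] →
        Metric.diam (convexHull ℝ {A, B, Cv}) ^ 2
            ≤ ρ * (volume (convexHull ℝ {A, B, Cv})).toReal →
        ∀ v : E2 → ℝ, ContDiff ℝ 2 v →
          Real.sqrt (∫ x in segment ℝ A B, ‖gradient v x‖ ^ 2 ∂μH[1])
            ≤ C * Real.sqrt (dist A B)
                * (Real.sqrt ((volume (convexHull ℝ {A, B, Cv})).toReal))⁻¹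
                * (Real.sqrt (∫ x in convexHull ℝ {A, B, Cv}, ‖gradient v x‖ ^ 2)
                    + Metric.diam (convexHull ℝ {A, B, Cv})
                      * Real.sqrt (∫ x in convexHull ℝ {A, B, Cv},
                          ‖fderiv ℝ (fun y => gradient v y) x‖ ^ 2)) := by
  refine ⟨1, one_pos, fun A B Cv hABC _ v hv ↦ ?_⟩
  simpa only [one_mul, measureReal_def] using
    stmt1_general finrank_euclideanSpace_fin volume hABC (contDiff_gradient hv (by norm_num))
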